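/- Let α = p/q be an irreducible fraction with 0 < p < q and let (x/r, y/s) be its pair of parents (so q = r + s). Then wt(r/q) = wt(α) and wt(s/q) = −wt(α). -/

import Mathlib

/-- `cf [a₀, a₁, …, aₙ]` is the continued fraction
`a₀ + 1/(a₁ + 1/(a₂ + ⋯ + 1/aₙ))`. -/
def cf : List ℕ → ℚ
  | [] => 0
  | [a] => (a : ℚ)
  | a :: t => (a : ℚ) + 1 / cf t

/-- The alternating sum `a₀ - a₁ + a₂ - ⋯` of a list. -/
def altSum : List ℕ → ℤ
  | [] => 0
  | a :: t => (a : ℤ) - altSum t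

/-- The weight of the continued fraction expansion `[a₀, a₁, …, aₙ]`:
`a₀ - a₁ + a₂ - ⋯ + (-1)ⁿ aₙ` if `n` is even, and
`a₀ - a₁ + a₂ - ⋯ + (-1)ⁿ aₙ + 2` if `n` is odd.  For a positive rational `α`,
`wt(α)` is this common value for any such expansion of `α`. -/
def wtExp (a₀ : ℕ) (t : List ℕ) : ℤ :=
  altSum (a₀ :: t) + (if Even t.length then 0 else 2)

/-- `(x/r, y/s)` is the pair of parents of `α`: they are Farey neighbors
(`x, y ≥ 0`, `r, s ≥ 1`, `r*y - x*s = 1`) and `α` is their Farey mediant. -/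
def IsParents (x r y s : ℕ) (α : ℚ) : Prop :=
  1 ≤ r ∧ 1 ≤ s ∧ r * y = x * s + 1 ∧
    α = ((x : ℚ) + (y : ℚ)) / ((r : ℚ) + (s : ℚ))

/-!
The weight satisfies `wt (α + 1) = wt α + 1` and `wt (1 / α) = 2 - wt α`, hence
`wt (α / (α + 1)) = wt α - 1`. So `wt α - 1` counts the right turns minus the left turns on the path
from the root `1` to `α` in the Stern–Brocot tree. Writing this path as a product `!![y, x; s, r]`
of the matrices `!![1, 1; 0, 1]` and `!![1, 0; 1, 1]`, whose columns are the parents of `α`,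
transposition reverses the path and exchanges left and right turns, so it negates the count.
When `α < 1` the path starts with a left turn; transposing the rest of it leads to `s / r`, which
gives `wt (s / r) = 1 - wt α`, and the weights of `r / q` and `s / q` follow since `q = r + s`.
-/

/-- The weight of the fraction `p / q`, computed by the Euclidean algorithm. The recursion is
`wt α = ⌊α⌋ + 2 - wt (1 / (α - ⌊α⌋))`, and the fraction `p / 0`, read as `∞`, has weight `2`. -/
def euclidWt (p q : ℕ) : ℤ :=
  if q = 0 then 2 else (p / q : ℕ) + 2 - euclidWt q (p % q)
termination_by q
decreasing_by exact Nat.mod_lt _ (by omega)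

section EuclidWt

variable {p q : ℕ}

lemma euclidWt_zero_right (p : ℕ) : euclidWt p 0 = 2 := by
  rw [euclidWt, if_pos rfl]

lemma euclidWt_of_pos (p : ℕ) (hq : 0 < q) :
    euclidWt p q = (p / q : ℕ) + 2 - euclidWt q (p % q) := by
  rw [euclidWt, if_neg hq.ne']

lemma euclidWt_zero_left (hq : 0 < q) : euclidWt 0 q = 0 := by
  simp [euclidWt_of_pos 0 hq, euclidWt_zero_right]

lemma euclidWt_self (hp : 0 < p) : euclidWt p p = 1 := by
  simp [euclidWt_of_pos p hp, Nat.div_self hp, euclidWt_zero_right]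

lemma euclidWt_of_lt (h : p < q) : euclidWt p q = 2 - euclidWt q p := by
  simp [euclidWt_of_pos p (Nat.zero_lt_of_lt h), Nat.div_eq_of_lt h, Nat.mod_eq_of_lt h]

lemma euclidWt_swap (hp : 0 < p) (q : ℕ) : euclidWt q p = 2 - euclidWt p q := by
  rcases lt_trichotomy q p with h | rfl | h
  · exact euclidWt_of_lt h
  · rw [euclidWt_self hp]; norm_num
  · rw [euclidWt_of_lt h]; ring

lemma euclidWt_add_mul_left (p a : ℕ) (hq : 0 < q) :
    euclidWt (p + a * q) q = euclidWt p q + a := by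
  rw [euclidWt_of_pos _ hq, euclidWt_of_pos p hq, Nat.add_mul_div_right p a hq,
    Nat.add_mul_mod_self_right]
  push_cast
  ring

lemma euclidWt_add_left (p : ℕ) (hq : 0 < q) : euclidWt (p + q) q = euclidWt p q + 1 := by
  simpa using euclidWt_add_mul_left p 1 hq

lemma euclidWt_add_right (hp : 0 < p) (q : ℕ) : euclidWt p (q + p) = euclidWt p q - 1 := by
  rw [euclidWt_swap (by omega), euclidWt_add_left q hp, euclidWt_swap hp]
  ring

lemma euclidWt_complement (hp : 0 < p) (hq : 0 < q) :
    euclidWt q (p + q) = -euclidWt p (p + q) := by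
  rw [euclidWt_add_right hq, add_comm p q, euclidWt_add_right hp, euclidWt_swap hp]
  ring

end EuclidWt

section ContinuedFraction

lemma cf_cons_cons (a b : ℕ) (t : List ℕ) : cf (a :: b :: t) = a + 1 / cf (b :: t) := rfl

lemma cf_nonneg : ∀ l : List ℕ, 0 ≤ cf l
  | [] => le_rfl
  | [a] => a.cast_nonneg
  | a :: b :: t => by
    have := cf_nonneg (b :: t)
    rw [cf_cons_cons]
    positivity

lemma cf_cons_pos {a : ℕ} (ha : 0 < a) : ∀ t : List ℕ, 0 < cf (a :: t)
  | [] => Nat.cast_pos.mpr ha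
  | b :: t => by
    have := cf_nonneg (b :: t)
    rw [cf_cons_cons]
    positivity

lemma wtExp_cons (a b : ℕ) (t : List ℕ) : wtExp a (b :: t) = a + 2 - wtExp b t := by
  simp only [wtExp, altSum, List.length_cons, Nat.even_add_one]
  split_ifs <;> ring

lemma wtExp_eq_euclidWt {t : List ℕ} (ht : ∀ b ∈ t, 0 < b) {a p q : ℕ} (hq : 0 < q)
    (h : cf (a :: t) = (p : ℚ) / q) : wtExp a t = euclidWt p q := by
  have hq' : (0 : ℚ) < q := Nat.cast_pos.mpr hq
  induction t generalizing a p q with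
  | nil =>
    have hp : p = 0 + a * q := by
      rw [cf, eq_div_iff hq'.ne'] at h
      rw [zero_add]
      exact_mod_cast h.symm
    rw [hp, euclidWt_add_mul_left 0 a hq, euclidWt_zero_left hq]
    simp [wtExp, altSum]
  | cons b t ih =>
    obtain ⟨hb, ht⟩ := List.forall_mem_cons.mp ht
    have hc : 0 < cf (b :: t) := cf_cons_pos hb t
    rw [cf_cons_cons, eq_div_iff hq'.ne'] at h
    have hap : a * q < p := by
      have : (a * q : ℚ) < p := by
        rw [← h, add_mul]
        exact lt_add_of_pos_right _ (by positivity)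
      exact_mod_cast this
    obtain ⟨d, rfl⟩ := Nat.exists_eq_add_of_le' hap.le
    have hd : 0 < d := by omega
    have hd' : (0 : ℚ) < d := Nat.cast_pos.mpr hd
    have htail : cf (b :: t) = (q : ℚ) / d := by
      push_cast at h
      rw [eq_div_iff hd'.ne']
      field_simp at h
      linear_combination -h
    rw [wtExp_cons, ih ht hd htail hd', euclidWt_add_mul_left d a hq, euclidWt_swap hd]
    ring

end ContinuedFraction

section Farey

variable {x r y s : ℕ}

lemma farey_left_den_pos (h : r * y = x * s + 1) : 0 < r :=
  Nat.pos_of_mul_pos_right (h.symm ▸ Nat.succ_pos _ : 0 < r * y)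

lemma farey_right_num_pos (h : r * y = x * s + 1) : 0 < y :=
  Nat.pos_of_mul_pos_left (h.symm ▸ Nat.succ_pos _ : 0 < r * y)

lemma farey_cases (h : r * y = x * s + 1) :
    (r ≤ x ∧ s ≤ y) ∨ (x ≤ r ∧ y ≤ s) ∨ (x = 0 ∧ r = 1 ∧ y = 1 ∧ s = 0) := by
  rcases le_or_gt r x with hrx | hxr
  · refine .inl ⟨hrx, ?_⟩
    by_contra! hys
    nlinarith
  rcases le_or_gt y s with hys | hsy
  · exact .inr (.inl ⟨hxr.le, hys⟩)
  have hx : x = 0 := by nlinarith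
  have hs : s = 0 := by nlinarith
  rw [hx, zero_mul, zero_add, mul_eq_one] at h
  exact .inr (.inr ⟨hx, h.1, h.2, hs⟩)

/- The steps are left multiplication of `!![y, x; s, r]` by `!![1, 1; 0, 1]` and `!![1, 0; 1, 1]`:
they prepend a turn to a path in the Stern–Brocot tree. -/
theorem farey_induction {motive : ∀ x r y s : ℕ, r * y = x * s + 1 → Prop}
    (root : motive 0 1 1 0 rfl)
    (right : ∀ x r y s (h : r * y = x * s + 1), motive x r y s h →
      motive (x + r) r (y + s) s (by linarith))
    (left : ∀ x r y s (h : r * y = x * s + 1), motive x r y s h →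
      motive x (r + x) y (s + y) (by linarith))
    (x r y s : ℕ) (h : r * y = x * s + 1) : motive x r y s h := by
  have hr : 0 < r := farey_left_den_pos h
  have hy : 0 < y := farey_right_num_pos h
  rcases farey_cases h with ⟨hrx, hsy⟩ | ⟨hxr, hys⟩ | ⟨rfl, rfl, rfl, rfl⟩
  · obtain ⟨x, rfl⟩ := Nat.exists_eq_add_of_le' hrx
    obtain ⟨y, rfl⟩ := Nat.exists_eq_add_of_le' hsy
    have h' : r * y = x * s + 1 := by linarith
    exact right x r y s h' (farey_induction root right left x r y s h')
  · obtain ⟨r, rfl⟩ := Nat.exists_eq_add_of_le' hxr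
    obtain ⟨s, rfl⟩ := Nat.exists_eq_add_of_le' hys
    have h' : r * y = x * s + 1 := by linarith
    exact left x r y s h' (farey_induction root right left x r y s h')
  · exact root
termination_by x + r + y + s

/- With `!![y, x; s, r]` and `b / a` read as paths in the Stern–Brocot tree, `wt - 1` is additive
under concatenation of paths. -/
lemma euclidWt_concat {a b : ℕ} (ha : 0 < a) (hb : 0 < b) (h : r * y = x * s + 1) :
    euclidWt (x * a + y * b) (r * a + s * b) =
      euclidWt (x + y) (r + s) + euclidWt b a - 1 := by
  induction x, r, y, s, h using farey_induction with
  | root => simp [euclidWt_self]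
  | right x r y s h ih =>
    have hr : 0 < r := farey_left_den_pos h
    rw [show (x + r) * a + (y + s) * b = x * a + y * b + (r * a + s * b) by ring,
      show x + r + (y + s) = x + y + (r + s) by ring, euclidWt_add_left _ (by positivity),
      euclidWt_add_left _ (by positivity), ih]
    ring
  | left x r y s h ih =>
    have hy : 0 < y := farey_right_num_pos h
    rw [show (r + x) * a + (s + y) * b = r * a + s * b + (x * a + y * b) by ring,
      show r + x + (s + y) = r + s + (x + y) by ring, euclidWt_add_right (by positivity),
      euclidWt_add_right (by positivity), ih]
    ring

lemma euclidWt_left_child (h : r * y = x * s + 1) :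
    euclidWt (x + (x + y)) (r + (r + s)) = euclidWt (x + y) (r + s) - 1 := by
  have hhalf : euclidWt 1 2 = 0 := by
    simpa [euclidWt_self] using euclidWt_add_right one_pos 1
  have hconcat := euclidWt_concat two_pos one_pos h
  rw [hhalf, add_zero] at hconcat
  convert hconcat using 2 <;> ring

lemma euclidWt_right_child (h : r * y = x * s + 1) :
    euclidWt (x + y + y) (r + s + s) = euclidWt (x + y) (r + s) + 1 := by
  have htwo : euclidWt 2 1 = 2 := by
    simpa [euclidWt_self] using euclidWt_add_left 1 one_pos
  have hconcat := euclidWt_concat one_pos two_pos h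
  rw [htwo, add_sub_assoc, show (2 - 1 : ℤ) = 1 by norm_num] at hconcat
  convert hconcat using 2 <;> ring

lemma euclidWt_transpose (h : r * y = x * s + 1) :
    euclidWt (s + y) (r + x) = 2 - euclidWt (x + y) (r + s) := by
  induction x, r, y, s, h using farey_induction with
  | root => simp [euclidWt_self]
  | right x r y s h ih =>
    have hr : 0 < r := farey_left_den_pos h
    have hT : r * y = s * x + 1 := by rw [h, mul_comm x s]
    rw [show s + (y + s) = s + (s + y) by ring, show r + (x + r) = r + (r + x) by ring,
      euclidWt_left_child hT, ih, show x + r + (y + s) = x + y + (r + s) by ring,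
      euclidWt_add_left _ (by positivity)]
    ring
  | left x r y s h ih =>
    have hy : 0 < y := farey_right_num_pos h
    have hT : r * y = s * x + 1 := by rw [h, mul_comm x s]
    rw [euclidWt_right_child hT, ih, show r + x + (s + y) = r + s + (x + y) by ring,
      euclidWt_add_right (by positivity)]
    ring

lemma euclidWt_left_den (h : r * y = x * s + 1) (hlt : x + y < r + s) :
    euclidWt r (r + s) = euclidWt (x + y) (r + s) := by
  have hr : 0 < r := farey_left_den_pos h
  have hy : 0 < y := farey_right_num_pos h
  obtain ⟨hxr, hys⟩ : x ≤ r ∧ y ≤ s := by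
    have := farey_cases h
    omega
  obtain ⟨r, rfl⟩ := Nat.exists_eq_add_of_le' hxr
  obtain ⟨s, rfl⟩ := Nat.exists_eq_add_of_le' hys
  have h' : r * y = x * s + 1 := by linarith
  calc euclidWt (r + x) (r + x + (s + y))
      = euclidWt (r + x) (s + y) - 1 := by rw [add_comm (r + x) (s + y), euclidWt_add_right hr]
    _ = 2 - euclidWt (s + y) (r + x) - 1 := by rw [euclidWt_swap (by positivity)]
    _ = euclidWt (x + y) (r + s) - 1 := by rw [euclidWt_transpose h']; ring
    _ = euclidWt (x + y) (r + x + (s + y)) := by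
      rw [← euclidWt_add_right (by positivity), add_add_add_comm]

lemma IsParents.eq_mediant {p q : ℕ} (h : IsParents x r y s ((p : ℚ) / q)) (hq : 0 < q)
    (hcop : p.Coprime q) : p = x + y ∧ q = r + s := by
  obtain ⟨hr, hs, hdet, hα⟩ := h
  have hmed : (x + y).Coprime (r + s) := by
    rw [← Nat.isCoprime_iff_coprime]
    refine ⟨r, -x, ?_⟩
    push_cast
    linear_combination (mod_cast hdet : (r * y : ℤ) = x * s + 1)
  have heq := Rat.div_int_inj (a := p) (b := q) (c := (x + y : ℕ)) (d := (r + s : ℕ))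
    (by omega) (by omega) hcop hmed (by push_cast; exact hα)
  exact_mod_cast heq

end Farey

/-- let `α = p/q` be irreducible with `0 < p < q` and pair of parents
`(x/r, y/s)` (so `q = r + s`).  Then `wt(r/q) = wt(α)` and `wt(s/q) = -wt(α)`;
i.e. for any continued fraction expansions `[0, l] = α`, `[0, m] = r/q` and
`[0, k] = s/q` with positive partial quotients, the corresponding weights satisfy
these relations. -/
theorem wt_parents (p q x r y s : ℕ) (hp : 0 < p) (hpq : p < q)
    (hcop : Nat.Coprime p q)
    (hpar : IsParents x r y s ((p : ℚ) / (q : ℚ)))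
    (l m k : List ℕ) (hl : ∀ a ∈ l, 0 < a) (hm : ∀ a ∈ m, 0 < a)
    (hk : ∀ a ∈ k, 0 < a)
    (hcl : cf (0 :: l) = (p : ℚ) / (q : ℚ))
    (hcm : cf (0 :: m) = (r : ℚ) / (q : ℚ))
    (hck : cf (0 :: k) = (s : ℚ) / (q : ℚ)) :
    wtExp 0 m = wtExp 0 l ∧ wtExp 0 k = -wtExp 0 l := by
  have hq : 0 < q := hp.trans hpq
  obtain ⟨rfl, rfl⟩ := hpar.eq_mediant hq hcop
  obtain ⟨hr, hs, hdet, -⟩ := hpar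
  have hwl : wtExp 0 l = euclidWt (x + y) (r + s) := wtExp_eq_euclidWt hl hq hcl
  have hwm : wtExp 0 m = euclidWt r (r + s) := wtExp_eq_euclidWt hm hq hcm
  have hwk : wtExp 0 k = euclidWt s (r + s) := wtExp_eq_euclidWt hk hq hck
  have hleft : euclidWt r (r + s) = euclidWt (x + y) (r + s) := euclidWt_left_den hdet hpq
  have hcompl : euclidWt s (r + s) = -euclidWt r (r + s) := euclidWt_complement hr hs
  exact ⟨by rw [hwm, hleft, hwl], by rw [hwk, hcompl, hleft, hwl]⟩
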